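/- arXiv:1610.03307 — 4 statements merged into one kernel-verified Lean document; each statement's English description precedes it below -/
import Mathlib

section
/- Let X be a complete, almost 3-hyperconvex metric space, let A_0 be a closed subset of X that is almost externally 3-hyperconvex in X, and let A_1, A_2 be closed subsets of X that are almost externally 2-hyperconvex in X. If A_0, A_1, A_2 are pairwise intersecting, then A_0 ∩ A_1 ∩ A_2 is nonempty. -/
/-- A metric space `X` is almost `n`-hyperconvex if for every family of `n` closed balls
`B(x i, r i)` with `d(x i, x j) ≤ r i + r j` and every `ε > 0`, the intersection
`⋂ i, B(x i, r i + ε)` is nonempty. -/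
def IsAlmostNHyperconvex (X : Type*) [MetricSpace X] (n : ℕ) : Prop :=
  ∀ (x : Fin n → X) (r : Fin n → ℝ),
    (∀ i j, dist (x i) (x j) ≤ r i + r j) →
    ∀ ε > (0 : ℝ), (⋂ i, Metric.closedBall (x i) (r i + ε)).Nonempty

/-- A subset `A` of a metric space `X` is almost externally `n`-hyperconvex in `X` if for
every family of `n` closed balls `B(x i, r i)` with `d(x i, A) ≤ r i` and
`d(x i, x j) ≤ r i + r j`, and every `ε > 0`, the intersection
`A ∩ ⋂ i, B(x i, r i + ε)` is nonempty. -/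
def IsAlmostExternallyNHyperconvex {X : Type*} [MetricSpace X] (A : Set X) (n : ℕ) : Prop :=
  ∀ (x : Fin n → X) (r : Fin n → ℝ),
    (∀ i, Metric.infDist (x i) A ≤ r i) →
    (∀ i j, dist (x i) (x j) ≤ r i + r j) →
    ∀ ε > (0 : ℝ), (A ∩ ⋂ i, Metric.closedBall (x i) (r i + ε)).Nonempty


open Metric Set Filter Topology

theorem aeh_two {X : Type*} [MetricSpace X] {A : Set X}
    (hA : IsAlmostExternallyNHyperconvex A 2) (x z : X) (r t ε : ℝ)
    (hr : 0 ≤ r) (ht : 0 ≤ t) (hx : infDist x A ≤ r) (hz : infDist z A ≤ t)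
    (hxz : dist x z ≤ r + t) (hε : 0 < ε) :
    ∃ a ∈ A, dist a x ≤ r + ε ∧ dist a z ≤ t + ε := by
  obtain ⟨a, haA, ha⟩ := hA ![x, z] ![r, t]
    (by intro i; fin_cases i <;> simpa)
    (by
      have h2 : dist z x ≤ t + r := by rw [dist_comm]; linarith
      intro i j; fin_cases i <;> fin_cases j <;> simp <;> linarith) ε hε
  rw [mem_iInter] at ha
  have h0 := ha 0
  have h1 := ha 1
  simp only [mem_closedBall] at h0 h1
  exact ⟨a, haA, by simpa using h0, by simpa using h1⟩

/-- One alternating step from `A'` to `A`, lowering the potential `φ`. -/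
def AltStep {X : Type*} [MetricSpace X] (A A' : Set X) (φ : X → ℝ) (s : ℝ) : Prop :=
  ∀ p ∈ A', ∀ g D ε : ℝ, 0 < g → 0 < ε → infDist p A ≤ g → φ p ≤ D →
    ∃ q ∈ A, dist q p ≤ g + ε ∧ φ q ≤ max s (D - g) + ε

theorem alternate {X : Type*} [MetricSpace X] {A A' : Set X} {φ : X → ℝ} {s : ℝ}
    (h : AltStep A A' φ s) (h' : AltStep A' A φ s) (y : X) (hy : y ∈ A) (hy' : y ∈ A')
    (L : ℝ) (hL : 0 ≤ L) (hφ : φ y ≤ s + L) (δ₀ : ℝ) (hδ₀ : 0 < δ₀) :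
    ∃ p, infDist p A ≤ δ₀ ∧ infDist p A' ≤ δ₀ ∧ φ p ≤ s + δ₀ ∧ dist p y ≤ 2 * L := by
  rcases hL.eq_or_lt with rfl | hL
  · refine ⟨y, ?_, ?_, by linarith, by simp⟩
    · rw [infDist_zero_of_mem hy]; exact hδ₀.le
    · rw [infDist_zero_of_mem hy']; exact hδ₀.le
  obtain ⟨N, hN⟩ := exists_nat_gt (2 * L / δ₀)
  have hN0 : (0 : ℝ) < N := lt_of_le_of_lt (by positivity) hN
  obtain ⟨δ, hδ⟩ : ∃ δ, δ = L / N := ⟨_, rfl⟩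
  obtain ⟨η, hη⟩ : ∃ η, η = δ / N := ⟨_, rfl⟩
  have hδ0 : 0 < δ := by rw [hδ]; positivity
  have hη0 : 0 < η := by rw [hη]; positivity
  have hNδ : N * δ = L := by rw [hδ]; field_simp
  have hNη : N * η = δ := by rw [hη]; field_simp
  have h2δ : 2 * δ ≤ δ₀ := by
    rw [div_lt_iff₀ hδ₀] at hN
    have : N * (2 * δ) ≤ N * δ₀ := by nlinarith
    exact le_of_mul_le_mul_left this hN0
  have key : ∀ n : ℕ, n ≤ N → ∃ p, (p ∈ A ∨ p ∈ A') ∧ infDist p A ≤ δ + n * η ∧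
      infDist p A' ≤ δ + n * η ∧ φ p ≤ s + L - n * δ + n * η ∧ dist p y ≤ 2 * n * δ := by
    intro n
    induction n with
    | zero =>
      intro _
      refine ⟨y, Or.inl hy, ?_, ?_, ?_, ?_⟩
      · rw [infDist_zero_of_mem hy]; simp [hδ0.le]
      · rw [infDist_zero_of_mem hy']; simp [hδ0.le]
      · simpa using hφ
      · simp
    | succ n ih =>
      intro hn
      obtain ⟨p, hp, h1, h2, h3, h4⟩ := ih (by omega)
      have hg : 0 < δ + n * η := by positivity
      have hnN : ((n : ℝ) + 1) ≤ N := by exact_mod_cast hn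
      have e1 : ((n : ℝ) + 1) * δ ≤ L := by nlinarith
      have e2 : ((n : ℝ) + 1) * η ≤ δ := by nlinarith
      have e3 : max s (s + L - n * δ + n * η - (δ + n * η)) = s + L - (n + 1) * δ := by
        rw [max_eq_right] <;> linarith
      push_cast
      rcases hp with hp | hp
      · obtain ⟨q, hq, hqp, hqφ⟩ := h' p hp _ _ η hg hη0 h2 h3
        rw [e3] at hqφ
        have := dist_triangle q p y
        refine ⟨q, Or.inr hq, ?_, ?_, ?_, ?_⟩
        · have := infDist_le_dist_of_mem (x := q) hp
          linarith
        · rw [infDist_zero_of_mem hq]; positivity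
        · nlinarith
        · linarith
      · obtain ⟨q, hq, hqp, hqφ⟩ := h p hp _ _ η hg hη0 h1 h3
        rw [e3] at hqφ
        have := dist_triangle q p y
        refine ⟨q, Or.inl hq, ?_, ?_, ?_, ?_⟩
        · rw [infDist_zero_of_mem hq]; positivity
        · have := infDist_le_dist_of_mem (x := q) hp
          linarith
        · nlinarith
        · linarith
  obtain ⟨p, _, h1, h2, h3, h4⟩ := key N le_rfl
  exact ⟨p, by linarith, by linarith, by linarith, by linarith⟩

theorem limit_point {X : Type*} [MetricSpace X] [CompleteSpace X] (F : X → ℝ)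
    (hF : Continuous F) (C : ℝ)
    (h : ∀ p, ∀ δ > (0 : ℝ), F p ≤ δ → ∃ q, F q ≤ δ / 2 ∧ dist p q ≤ C * δ)
    (p : X) (δ : ℝ) (hδ : 0 < δ) (hp : F p ≤ δ) :
    ∃ z, F z ≤ 0 ∧ dist p z ≤ 2 * C * δ := by
  have h2 : ∀ n : ℕ, ∀ p : {p : X // F p ≤ δ / 2 ^ n},
      ∃ q : {p : X // F p ≤ δ / 2 ^ (n + 1)}, dist p.1 q.1 ≤ C * (δ / 2 ^ n) := by
    intro n p
    obtain ⟨q, hq, hd⟩ := h p.1 (δ / 2 ^ n) (by positivity) p.2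
    exact ⟨⟨q, by rw [pow_succ, ← div_div]; exact hq⟩, hd⟩
  choose f hf using h2
  let v : ∀ n : ℕ, {p : X // F p ≤ δ / 2 ^ n} :=
    fun n => Nat.rec (motive := fun n => {p : X // F p ≤ δ / 2 ^ n}) ⟨p, by simpa using hp⟩
      (fun n q => f n q) n
  let u : ℕ → X := fun n => (v n).1
  have hu : ∀ n, dist (u n) (u (n + 1)) ≤ (2 * C * δ) / 2 / 2 ^ n := by
    intro n
    have := hf n (v n)
    calc dist (u n) (u (n + 1)) ≤ C * (δ / 2 ^ n) := this
      _ = _ := by ring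
  obtain ⟨z, hz⟩ := cauchySeq_tendsto_of_complete (cauchySeq_of_le_geometric_two hu)
  refine ⟨z, ?_, dist_le_of_le_geometric_two_of_tendsto₀ hu hz⟩
  have l1 : Tendsto (fun n => F (u n)) atTop (𝓝 (F z)) := (hF.tendsto z).comp hz
  have l2 : Tendsto (fun n : ℕ => δ / 2 ^ n) atTop (𝓝 0) := by
    have := (tendsto_pow_atTop_nhds_zero_of_lt_one (r := (1 / 2 : ℝ))
      (by norm_num) (by norm_num)).const_mul δ
    simpa [div_eq_mul_inv] using this
  exact le_of_tendsto_of_tendsto' l1 l2 (fun n => (v n).2)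

theorem altStep_dist {X : Type*} [MetricSpace X] {A A' : Set X}
    (hA : IsAlmostExternallyNHyperconvex A 2) (x : X) (s : ℝ) (hx : infDist x A ≤ s) :
    AltStep A A' (fun p => dist p x) s := by
  intro p _ g D ε hg hε hpA hpx
  have hs : 0 ≤ s := infDist_nonneg.trans hx
  have m1 := le_max_left s (D - g)
  have m2 := le_max_right s (D - g)
  exact aeh_two hA p x g (max s (D - g)) ε hg.le (by linarith) hpA (by linarith)
    (by simp only at hpx; linarith) hε

theorem mem_of_infDist_le {X : Type*} [MetricSpace X] {A : Set X} (hc : IsClosed A)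
    (hne : A.Nonempty) {z : X} (h : infDist z A ≤ 0) : z ∈ A :=
  (hc.mem_iff_infDist_zero hne).2 (le_antisymm h infDist_nonneg)

theorem two_sets {X : Type*} [MetricSpace X] [CompleteSpace X] {A A' : Set X}
    (hc : IsClosed A) (hc' : IsClosed A')
    (hA : IsAlmostExternallyNHyperconvex A 2) (hA' : IsAlmostExternallyNHyperconvex A' 2)
    (hne : (A ∩ A').Nonempty) (x : X) (s ε : ℝ) (hε : 0 < ε)
    (hx : infDist x A ≤ s) (hx' : infDist x A' ≤ s) :
    ∃ z ∈ A, z ∈ A' ∧ dist z x ≤ s + ε := by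
  obtain ⟨y, hy, hy'⟩ := hne
  have loc : ∀ x s δ, 0 < δ → infDist x A ≤ s → infDist x A' ≤ s →
      ∃ q, infDist q A ≤ δ ∧ infDist q A' ≤ δ ∧ dist q x ≤ s + δ := by
    intro x s δ hδ h1 h2
    have hs : 0 ≤ s := infDist_nonneg.trans h1
    obtain ⟨q, a, b, c, _⟩ := alternate (altStep_dist (A' := A') hA x s h1)
      (altStep_dist (A' := A) hA' x s h2) y hy hy' (dist y x) dist_nonneg
      (by linarith) δ hδ
    exact ⟨q, a, b, c⟩
  obtain ⟨p, p1, p2, p3⟩ := loc x s (ε / 5) (by linarith) hx hx'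
  obtain ⟨z, hz, hpz⟩ := limit_point (fun p => max (infDist p A) (infDist p A'))
    ((continuous_infDist_pt A).max (continuous_infDist_pt A')) 2
    (by
      intro p δ hδ hp
      simp only [max_le_iff] at hp
      obtain ⟨q, a, b, c⟩ := loc p δ (δ / 2) (by linarith) hp.1 hp.2
      exact ⟨q, max_le a b, by rw [dist_comm]; linarith⟩)
    p (ε / 5) (by linarith) (max_le p1 p2)
  simp only [max_le_iff] at hz
  refine ⟨z, mem_of_infDist_le hc ⟨y, hy⟩ hz.1, mem_of_infDist_le hc' ⟨y, hy'⟩ hz.2, ?_⟩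
  have := dist_triangle z p x
  rw [dist_comm] at hpz
  linarith

theorem altStep_infDist {X : Type*} [MetricSpace X] [CompleteSpace X] {A₀ A A' : Set X}
    (hc₀ : IsClosed A₀) (hc : IsClosed A)
    (hA₀ : IsAlmostExternallyNHyperconvex A₀ 2) (hA : IsAlmostExternallyNHyperconvex A 2)
    (hne : (A₀ ∩ A).Nonempty) :
    AltStep A A' (fun p => infDist p A₀) 0 := by
  intro p _ g D ε hg hε hpA hp0
  obtain ⟨z, hz0, hz, hd⟩ := two_sets hc₀ hc hA₀ hA hne p (max g D) (ε / 2) (by linarith)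
    (hp0.trans (le_max_right _ _)) (hpA.trans (le_max_left _ _))
  have m1 := le_max_left 0 (D - g)
  have m2 := le_max_right 0 (D - g)
  have m3 : max g D ≤ g + max 0 (D - g) := max_le (by linarith) (by linarith)
  obtain ⟨q, hq, h1, h2⟩ := aeh_two hA p z g (max 0 (D - g) + ε / 2) (ε / 2) hg.le
    (by linarith) hpA (by rw [infDist_zero_of_mem hz]; linarith)
    (by rw [dist_comm]; linarith) (by linarith)
  have := infDist_le_dist_of_mem (x := q) hz0
  exact ⟨q, hq, by linarith, by simp only; linarith⟩

theorem aeh_three_two {X : Type*} [MetricSpace X] {A : Set X}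
    (hA : IsAlmostExternallyNHyperconvex A 3) : IsAlmostExternallyNHyperconvex A 2 := by
  intro x r h1 h2 ε hε
  obtain ⟨a, haA, ha⟩ := hA ![x 0, x 1, x 1] ![r 0, r 1, r 1]
    (by intro i; fin_cases i <;> simp [h1])
    (by intro i j; fin_cases i <;> fin_cases j <;>
      first | exact h2 0 0 | exact h2 0 1 | exact h2 1 0 | exact h2 1 1) ε hε
  rw [mem_iInter] at ha
  refine ⟨a, haA, mem_iInter.2 ?_⟩
  intro i
  fin_cases i
  · exact ha 0
  · exact ha 1

theorem intersection_of_three_almost_externally_hyperconvex_sets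
    (X : Type*) [MetricSpace X] [CompleteSpace X] (hX : IsAlmostNHyperconvex X 3)
    (A₀ A₁ A₂ : Set X) (hA₀c : IsClosed A₀) (hA₁c : IsClosed A₁) (hA₂c : IsClosed A₂)
    (hA₀ : IsAlmostExternallyNHyperconvex A₀ 3)
    (hA₁ : IsAlmostExternallyNHyperconvex A₁ 2)
    (hA₂ : IsAlmostExternallyNHyperconvex A₂ 2)
    (h01 : (A₀ ∩ A₁).Nonempty) (h02 : (A₀ ∩ A₂).Nonempty) (h12 : (A₁ ∩ A₂).Nonempty) :
    (A₀ ∩ A₁ ∩ A₂).Nonempty := by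
  have hA₀' := aeh_three_two hA₀
  obtain ⟨w, hw1, hw2⟩ := h12
  obtain ⟨z, hz, -⟩ := limit_point
    (fun p => max (infDist p A₀) (max (infDist p A₁) (infDist p A₂)))
    ((Metric.continuous_infDist_pt A₀).max
      ((Metric.continuous_infDist_pt A₁).max (Metric.continuous_infDist_pt A₂))) 8
    (by
      intro p δ hδ hp
      simp only [max_le_iff] at hp
      obtain ⟨p0, p1, p2⟩ := hp
      obtain ⟨y, hy1, hy2, hyp⟩ := two_sets hA₁c hA₂c hA₁ hA₂ ⟨w, hw1, hw2⟩ p δ δ hδ p1 p2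
      have hy0 : infDist y A₀ ≤ 0 + 3 * δ := by
        have := infDist_le_infDist_add_dist (s := A₀) (x := y) (y := p)
        linarith
      obtain ⟨q, q1, q2, q0, hqy⟩ := alternate
        (altStep_infDist (A' := A₂) hA₀c hA₁c hA₀' hA₁ h01)
        (altStep_infDist (A' := A₁) hA₀c hA₂c hA₀' hA₂ h02)
        y hy1 hy2 (3 * δ) (by linarith) hy0 (δ / 2) (by linarith)
      refine ⟨q, max_le (by linarith) (max_le q1 q2), ?_⟩
      have := dist_triangle q y p
      rw [dist_comm]
      linarith)
    w (|max (infDist w A₀) (max (infDist w A₁) (infDist w A₂))| + 1) (by positivity)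
    (by linarith [le_abs_self (max (infDist w A₀) (max (infDist w A₁) (infDist w A₂)))])
  simp only [max_le_iff] at hz
  exact ⟨z, ⟨mem_of_infDist_le hA₀c h01.left hz.1, mem_of_infDist_le hA₁c ⟨w, hw1⟩ hz.2.1⟩,
    mem_of_infDist_le hA₂c ⟨w, hw2⟩ hz.2.2⟩
end

section
/- Let X be a complete, 4-hyperconvex metric space. Let A_0 ⊂ X be externally 3-hyperconvex in X and A_1 ⊂ X be externally 2-hyperconvex in X, with A_0 ∩ A_1 nonempty. Then A_0 ∩ A_1 is externally 2-hyperconvex in X. -/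
/-- A metric space `X` is `n`-hyperconvex if for every family of `n` closed balls
`B(x i, r i)` with `d(x i, x j) ≤ r i + r j`, the intersection is nonempty. -/
def IsNHyperconvex (X : Type*) [MetricSpace X] (n : ℕ) : Prop :=
  ∀ (x : Fin n → X) (r : Fin n → ℝ),
    (∀ i j, dist (x i) (x j) ≤ r i + r j) →
    (⋂ i, Metric.closedBall (x i) (r i)).Nonempty

/-- A subset `A` of a metric space `X` is externally `n`-hyperconvex in `X` if for every
family of `n` closed balls `B(x i, r i)` with `d(x i, A) ≤ r i` and
`d(x i, x j) ≤ r i + r j`, the intersection `A ∩ ⋂ i, B(x i, r i)` is nonempty. -/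
def IsExternallyNHyperconvex {X : Type*} [MetricSpace X] (A : Set X) (n : ℕ) : Prop :=
  ∀ (x : Fin n → X) (r : Fin n → ℝ),
    (∀ i, Metric.infDist (x i) A ≤ r i) →
    (∀ i j, dist (x i) (x j) ≤ r i + r j) →
    (A ∩ ⋂ i, Metric.closedBall (x i) (r i)).Nonempty

/-- Convenient form of external 2-hyperconvexity. -/
def ExtTwo {X : Type*} [MetricSpace X] (A : Set X) : Prop :=
  ∀ (x y : X) (r s : ℝ), Metric.infDist x A ≤ r → Metric.infDist y A ≤ s →
    dist x y ≤ r + s → ∃ a ∈ A, dist a x ≤ r ∧ dist a y ≤ s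

lemma ExtTwo.of_ext {X : Type*} [MetricSpace X] {A : Set X}
    (h : IsExternallyNHyperconvex A 2) : ExtTwo A := by
  intro x y r s hx hy hxy
  have hr : 0 ≤ r := Metric.infDist_nonneg.trans hx
  have hs : 0 ≤ s := Metric.infDist_nonneg.trans hy
  obtain ⟨a, haA, ha⟩ := h ![x, y] ![r, s]
    (by intro i; fin_cases i <;> simpa)
    (by
      intro i j
      fin_cases i <;> fin_cases j <;> simp <;> first | linarith | (rw [dist_comm]; linarith))
  rw [Set.mem_iInter] at ha
  exact ⟨a, haA, by simpa using ha 0, by simpa using ha 1⟩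

lemma ext_three {X : Type*} [MetricSpace X] {A : Set X}
    (h : IsExternallyNHyperconvex A 3) (x y z : X) (r s t : ℝ)
    (hx : Metric.infDist x A ≤ r) (hy : Metric.infDist y A ≤ s) (hz : Metric.infDist z A ≤ t)
    (hxy : dist x y ≤ r + s) (hxz : dist x z ≤ r + t) (hyz : dist y z ≤ s + t) :
    ∃ a ∈ A, dist a x ≤ r ∧ dist a y ≤ s ∧ dist a z ≤ t := by
  have hr : 0 ≤ r := Metric.infDist_nonneg.trans hx
  have hs : 0 ≤ s := Metric.infDist_nonneg.trans hy
  have ht : 0 ≤ t := Metric.infDist_nonneg.trans hz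
  obtain ⟨a, haA, ha⟩ := h ![x, y, z] ![r, s, t]
    (by intro i; fin_cases i <;> simpa)
    (by
      intro i j
      fin_cases i <;> fin_cases j <;> simp <;> first | linarith | (rw [dist_comm]; linarith))
  rw [Set.mem_iInter] at ha
  exact ⟨a, haA, by simpa using ha 0, by simpa using ha 1, by simpa using ha 2⟩

lemma ExtTwo.mem_of_infDist {X : Type*} [MetricSpace X] {A : Set X} (h : ExtTwo A) {x : X}
    (hx : Metric.infDist x A ≤ 0) : x ∈ A := by
  obtain ⟨a, ha, h1, -⟩ := h x x 0 0 hx hx (by simp)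
  rwa [← dist_le_zero.1 h1]

lemma ExtTwo.isClosed {X : Type*} [MetricSpace X] {A : Set X} (h : ExtTwo A) : IsClosed A := by
  refine isClosed_of_closure_subset fun x hx => h.mem_of_infDist ?_
  exact (Metric.infDist_zero_of_mem_closure hx).le

/-- Walking towards `x` while alternating between `A` and `B`. -/
lemma approach {X : Type*} [MetricSpace X] (x : X) (r σ : ℝ) (hσ : 0 ≤ σ) (n : ℕ) :
    ∀ (A B : Set X), ExtTwo A → ExtTwo B → Metric.infDist x A ≤ r → Metric.infDist x B ≤ r →
      ∀ a ∈ A, Metric.infDist a B ≤ σ → dist a x ≤ r + n * σ →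
        ∃ a' ∈ A, ∃ b' ∈ B, dist a' x ≤ r ∧ dist b' x ≤ r ∧ dist a' b' ≤ σ ∧
          dist a a' ≤ (n + 1) * σ ∧ dist a b' ≤ (n + 1) * σ := by
  induction n with
  | zero =>
    intro A B hA hB hxA hxB a ha haB hax
    simp only [Nat.cast_zero, zero_mul, add_zero, zero_add, one_mul] at hax ⊢
    obtain ⟨b, hb, h1, h2⟩ := hB a x σ r haB hxB (by linarith)
    rw [dist_comm] at h1
    exact ⟨a, ha, b, hb, hax, h2, h1, by simpa using hσ, h1⟩
  | succ n ih =>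
    intro A B hA hB hxA hxB a ha haB hax
    push_cast at hax ⊢
    have hn : 0 ≤ (n : ℝ) * σ := by positivity
    obtain ⟨b, hb, h1, h2⟩ := hB a x σ (r + n * σ) haB (by linarith) (by linarith)
    obtain ⟨b', hb', a', ha', h3, h4, h5, h6, h7⟩ := ih B A hB hA hxB hxA b hb
      ((Metric.infDist_le_dist_of_mem ha).trans h1) h2
    rw [dist_comm] at h1 h5
    refine ⟨a', ha', b', hb', h4, h3, h5, ?_, ?_⟩
    · linarith [dist_triangle a b a']
    · linarith [dist_triangle a b b']

/-- From a point of `A` one reaches `A ∩ B` within distance `d(a, B)`. -/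
lemma inter_near {X : Type*} [MetricSpace X] [CompleteSpace X] {A B : Set X}
    (hA : ExtTwo A) (hB : ExtTwo B) (hAB : (A ∩ B).Nonempty) (a : X) (ha : a ∈ A) (r : ℝ)
    (har : Metric.infDist a B ≤ r) : ∃ z ∈ A ∩ B, dist a z ≤ r := by
  obtain ⟨z, hzA, hzB⟩ := hAB
  rcases (Metric.infDist_nonneg.trans har).eq_or_lt with h0 | hr
  · subst h0
    exact ⟨a, ⟨ha, hB.mem_of_infDist har⟩, by simp⟩
  have step : ∀ (n : ℕ) (p : {p : X // p ∈ A ∧ Metric.infDist p B ≤ r / 2 ^ n}),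
      ∃ q : {p : X // p ∈ A ∧ Metric.infDist p B ≤ r / 2 ^ (n + 1)},
        dist p.1 q.1 ≤ r / 2 / 2 ^ n := by
    rintro n ⟨p, hpA, hpB⟩
    set s := r / 2 ^ n with hs
    have hspos : 0 < s := by positivity
    have e1 : r / 2 ^ (n + 1) = s / 2 := by rw [hs, pow_succ]; field_simp
    have e2 : r / 2 / 2 ^ n = s / 2 := by rw [hs]; field_simp
    rw [e1, e2]
    obtain ⟨N, hN⟩ := exists_nat_ge (dist z p / (s / 2))
    rw [div_le_iff₀ (by positivity)] at hN
    obtain ⟨a', ha', b', hb', -, h2, h3, -, -⟩ := approach p s (s / 2) (by positivity) N A B hA hB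
      (by rw [Metric.infDist_zero_of_mem hpA]; exact hspos.le) hpB z hzA
      (by rw [Metric.infDist_zero_of_mem hzB]; positivity) (by linarith)
    have hbA : Metric.infDist b' A ≤ s / 2 :=
      (Metric.infDist_le_dist_of_mem ha').trans (by rwa [dist_comm])
    obtain ⟨q, hq, h4, h5⟩ := hA b' p (s / 2) (s / 2) hbA
      (by rw [Metric.infDist_zero_of_mem hpA]; positivity) (by linarith)
    exact ⟨⟨q, hq, (Metric.infDist_le_dist_of_mem hb').trans h4⟩, by rwa [dist_comm]⟩
  choose g hg using step
  let f : (n : ℕ) → {p : X // p ∈ A ∧ Metric.infDist p B ≤ r / 2 ^ n} :=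
    fun n => Nat.rec ⟨a, ha, by simpa using har⟩ (fun n p => g n p) n
  have hf : ∀ n, dist (f n).1 (f (n + 1)).1 ≤ r / 2 / 2 ^ n := fun n => hg n (f n)
  obtain ⟨w, hw⟩ := cauchySeq_tendsto_of_complete
    (cauchySeq_of_le_geometric_two (f := fun n => (f n).1) hf)
  refine ⟨w, ⟨hA.isClosed.mem_of_tendsto hw (Filter.Eventually.of_forall fun n => (f n).2.1),
    hB.mem_of_infDist ?_⟩, dist_le_of_le_geometric_two_of_tendsto₀ (f := fun n => (f n).1) hf hw⟩
  have h1 : Filter.Tendsto (fun n => Metric.infDist (f n).1 B) Filter.atTop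
      (nhds (Metric.infDist w B)) := ((Metric.continuous_infDist_pt B).tendsto w).comp hw
  have h2 : Filter.Tendsto (fun n : ℕ => r / 2 ^ n) Filter.atTop (nhds 0) :=
    tendsto_const_nhds.div_atTop (tendsto_pow_atTop_atTop_of_one_lt (by norm_num))
  exact le_of_tendsto_of_tendsto' h1 h2 fun n => (f n).2.2

/-- Helly property for `A`, `B` and a ball. -/
lemma inter_ball {X : Type*} [MetricSpace X] [CompleteSpace X] {A B : Set X}
    (hA : ExtTwo A) (hB : ExtTwo B) (hAB : (A ∩ B).Nonempty) (x : X) (r : ℝ)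
    (hxA : Metric.infDist x A ≤ r) (hxB : Metric.infDist x B ≤ r) :
    ∃ z ∈ A ∩ B, dist z x ≤ r := by
  have hr : 0 ≤ r := Metric.infDist_nonneg.trans hxA
  obtain ⟨z, hz⟩ := hAB
  set c := dist z x + 1 with hc
  have hcpos : 0 < c := by positivity
  have step : ∀ (n : ℕ) (p : {p : X // p ∈ A ∩ B ∧ dist p x ≤ r + c / 2 ^ n}),
      ∃ q : {p : X // p ∈ A ∩ B ∧ dist p x ≤ r + c / 2 ^ (n + 1)},
        dist p.1 q.1 ≤ (4 * c) / 2 / 2 ^ n := by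
    rintro n ⟨p, hp, hpx⟩
    set s := c / 2 ^ n with hs
    have hspos : 0 < s := by positivity
    have e1 : c / 2 ^ (n + 1) = s / 2 := by rw [hs, pow_succ]; field_simp
    have e2 : (4 * c) / 2 / 2 ^ n = 2 * s := by rw [hs]; field_simp; norm_num
    rw [e1, e2]
    obtain ⟨a', ha', b', hb', h1, h2, h3, h4, -⟩ := approach x r (s / 2) (by positivity) 2 A B
      hA hB hxA hxB p hp.1
      (by rw [Metric.infDist_zero_of_mem hp.2]; positivity) (by push_cast; linarith)
    push_cast at h4
    obtain ⟨q, hq, h5⟩ := inter_near hA hB ⟨z, hz⟩ a' ha' (s / 2)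
      ((Metric.infDist_le_dist_of_mem hb').trans h3)
    refine ⟨⟨q, hq, ?_⟩, ?_⟩
    · linarith [dist_triangle q a' x, dist_comm q a']
    · show dist p q ≤ 2 * s
      linarith [dist_triangle p a' q]
  choose g hg using step
  let f : (n : ℕ) → {p : X // p ∈ A ∩ B ∧ dist p x ≤ r + c / 2 ^ n} :=
    fun n => Nat.rec ⟨z, hz, by simp only [pow_zero, div_one]; linarith⟩ (fun n p => g n p) n
  have hf : ∀ n, dist (f n).1 (f (n + 1)).1 ≤ (4 * c) / 2 / 2 ^ n := fun n => hg n (f n)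
  obtain ⟨w, hw⟩ := cauchySeq_tendsto_of_complete
    (cauchySeq_of_le_geometric_two (f := fun n => (f n).1) hf)
  refine ⟨w, (hA.isClosed.inter hB.isClosed).mem_of_tendsto hw
    (Filter.Eventually.of_forall fun n => (f n).2.1), ?_⟩
  have h1 : Filter.Tendsto (fun n => dist (f n).1 x) Filter.atTop (nhds (dist w x)) :=
    hw.dist tendsto_const_nhds
  have h2 : Filter.Tendsto (fun n : ℕ => r + c / 2 ^ n) Filter.atTop (nhds (r + 0)) :=
    tendsto_const_nhds.add
      (tendsto_const_nhds.div_atTop (tendsto_pow_atTop_atTop_of_one_lt (by norm_num)))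
  rw [add_zero] at h2
  exact le_of_tendsto_of_tendsto' h1 h2 fun n => (f n).2.2

theorem inter_externally_three_and_two_hyperconvex
    (X : Type*) [MetricSpace X] [CompleteSpace X] (hX : IsNHyperconvex X 4)
    (A₀ A₁ : Set X)
    (hA₀ : IsExternallyNHyperconvex A₀ 3) (hA₁ : IsExternallyNHyperconvex A₁ 2)
    (h01 : (A₀ ∩ A₁).Nonempty) :
    IsExternallyNHyperconvex (A₀ ∩ A₁) 2 := by
  intro x r hx hd
  have hB : ExtTwo A₁ := ExtTwo.of_ext hA₁
  have hA : ExtTwo A₀ := by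
    intro p q s t hp hq hpq
    have ht : 0 ≤ t := Metric.infDist_nonneg.trans hq
    obtain ⟨a, ha, h1, h2, -⟩ := ext_three hA₀ p q q s t t hp hq hq hpq hpq (by simpa using ht)
    exact ⟨a, ha, h1, h2⟩
  have hxA : ∀ i, Metric.infDist (x i) A₀ ≤ r i := fun i =>
    (Metric.infDist_le_infDist_of_subset Set.inter_subset_left h01).trans (hx i)
  have hxB : ∀ i, Metric.infDist (x i) A₁ ≤ r i := fun i =>
    (Metric.infDist_le_infDist_of_subset Set.inter_subset_right h01).trans (hx i)
  obtain ⟨z, hz, hz0⟩ := inter_ball hA hB h01 (x 0) (r 0) (hxA 0) (hxB 0)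
  set C := A₀ ∩ Metric.closedBall (x 0) (r 0) with hC
  have hCne : C.Nonempty := ⟨z, hz.1, hz0⟩
  have key : ∀ (p : X) (s : ℝ), Metric.infDist p C ≤ s → dist (x 0) p ≤ r 0 + s := by
    intro p s hp
    refine le_of_forall_pos_le_add fun ε hε => ?_
    obtain ⟨c, hc, hc'⟩ := (Metric.infDist_lt_iff hCne).1 (show Metric.infDist p C < s + ε by linarith)
    have : dist c (x 0) ≤ r 0 := hc.2
    linarith [dist_triangle (x 0) c p, dist_comm (x 0) c, dist_comm c p]
  have hsub : ∀ p, Metric.infDist p A₀ ≤ Metric.infDist p C := fun p =>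
    Metric.infDist_le_infDist_of_subset Set.inter_subset_left hCne
  have hCE : ExtTwo C := by
    intro p q s t hp hq hpq
    obtain ⟨a, ha, h1, h2, h3⟩ := ext_three hA₀ (x 0) p q (r 0) s t (hxA 0)
      ((hsub p).trans hp) ((hsub q).trans hq) (key p s hp) (key q t hq) hpq
    exact ⟨a, ⟨ha, h1⟩, h2, h3⟩
  have hx1C : Metric.infDist (x 1) C ≤ r 1 := by
    obtain ⟨a, ha, h1, h2⟩ := hA (x 0) (x 1) (r 0) (r 1) (hxA 0) (hxA 1) (hd 0 1)
    exact (Metric.infDist_le_dist_of_mem (show a ∈ C from ⟨ha, h1⟩)).trans (by rwa [dist_comm])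
  obtain ⟨w, hw, hw1⟩ := inter_ball hCE hB ⟨z, ⟨hz.1, hz0⟩, hz.2⟩ (x 1) (r 1) hx1C (hxB 1)
  refine ⟨w, ⟨hw.1.1, hw.2⟩, ?_⟩
  rw [Set.mem_iInter]
  intro i
  fin_cases i
  · exact hw.1.2
  · exact hw1
end

section
/- Let X be a complete, 4-hyperconvex metric space and let A_1, ..., A_m be subsets of X, each externally 2-hyperconvex in X, such that A_i ∩ A_j is nonempty for all i, j. Then the intersection ⋂_{i=1}^m A_i is externally n-hyperconvex in X for every positive integer n. -/
namespace HypCvx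

variable {X : Type*} [MetricSpace X]

/-- `x` is at distance at most `r` from `A`. -/
def Near (A : Set X) (x : X) (r : ℝ) : Prop := ∀ ε > 0, ∃ a ∈ A, dist a x ≤ r + ε

/-- working version of external 2-hyperconvexity. -/
def E (A : Set X) : Prop := ∀ x y r s, Near A x r → Near A y s → dist x y ≤ r + s →
  ∃ a ∈ A, dist a x ≤ r ∧ dist a y ≤ s

/-- four ball property. -/
def H4 (X : Type*) [MetricSpace X] : Prop := ∀ (x y z w : X) (a b c d : ℝ),
  0 ≤ a → 0 ≤ b → 0 ≤ c → 0 ≤ d →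
  dist x y ≤ a + b → dist x z ≤ a + c → dist x w ≤ a + d → dist y z ≤ b + c →
  dist y w ≤ b + d → dist z w ≤ c + d →
  ∃ p, dist p x ≤ a ∧ dist p y ≤ b ∧ dist p z ≤ c ∧ dist p w ≤ d

/-- closed neighbourhood. -/
def N (C : Set X) (s : ℝ) : Set X := {y | ∃ c ∈ C, dist y c ≤ s}

theorem h4_of (hX : IsNHyperconvex X 4) : H4 X := by
  intro x y z w a b c d ha hb hc hd h1 h2 h3 h4 h5 h6
  obtain ⟨p, hp⟩ := hX ![x, y, z, w] ![a, b, c, d] (by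
    intro i j
    fin_cases i <;> fin_cases j <;> simp <;>
      first
        | assumption
        | linarith
        | (rw [dist_comm]; linarith))
  simp only [Set.mem_iInter, Metric.mem_closedBall] at hp
  exact ⟨p, by simpa using hp 0, by simpa using hp 1, by simpa using hp 2, by simpa using hp 3⟩

theorem H4.h3 (h : H4 X) (x y z : X) (a b c : ℝ) (ha : 0 ≤ a) (hb : 0 ≤ b) (hc : 0 ≤ c)
    (h1 : dist x y ≤ a + b) (h2 : dist x z ≤ a + c) (h3 : dist y z ≤ b + c) :
    ∃ p, dist p x ≤ a ∧ dist p y ≤ b ∧ dist p z ≤ c := by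
  obtain ⟨p, hp⟩ := h x y z z a b c c ha hb hc hc h1 h2 h2 h3 h3 (by simp; linarith)
  exact ⟨p, hp.1, hp.2.1, hp.2.2.1⟩

theorem H4.h2 (h : H4 X) (x y : X) (a b : ℝ) (ha : 0 ≤ a) (hb : 0 ≤ b)
    (h1 : dist x y ≤ a + b) : ∃ p, dist p x ≤ a ∧ dist p y ≤ b := by
  obtain ⟨p, hp⟩ := h.h3 x y y a b b ha hb hb h1 h1 (by simp; linarith)
  exact ⟨p, hp.1, hp.2.1⟩

theorem near_of {A : Set X} {x : X} {r : ℝ} (h : ∃ a ∈ A, dist a x ≤ r) : Near A x r := by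
  intro ε hε
  obtain ⟨a, ha, h⟩ := h
  exact ⟨a, ha, by linarith⟩

theorem Near.nonneg {A : Set X} {x : X} {r : ℝ} (h : Near A x r) : 0 ≤ r := by
  refine le_of_forall_pos_le_add fun ε hε => ?_
  obtain ⟨a, _, ha⟩ := h ε hε
  exact dist_nonneg.trans ha

theorem Near.mono {A B : Set X} {x : X} {r : ℝ} (h : Near A x r) (hAB : A ⊆ B) : Near B x r := by
  intro ε hε
  obtain ⟨a, h1, ha⟩ := h ε hε
  exact ⟨a, hAB h1, ha⟩

theorem Near.dist_le {A : Set X} {x c : X} {r s : ℝ} (h : Near A x r)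
    (hA : ∀ a ∈ A, dist a c ≤ s) : dist x c ≤ r + s := by
  refine le_of_forall_pos_le_add fun ε hε => ?_
  obtain ⟨a, h1, ha⟩ := h ε hε
  have := dist_triangle_left x c a
  have := hA a h1
  linarith

theorem E.prox {A : Set X} (hA : E A) {x : X} {r : ℝ} (h : Near A x r) :
    ∃ a ∈ A, dist a x ≤ r := by
  obtain ⟨a, h1, h2, _⟩ := hA x x r r h h (by simp; linarith [h.nonneg])
  exact ⟨a, h1, h2⟩

theorem E.mem {A : Set X} (hA : E A) {x : X} (h : Near A x 0) : x ∈ A := by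
  obtain ⟨a, h1, h2⟩ := hA.prox h
  rwa [← dist_le_zero.1 h2]

theorem E_ball (h : H4 X) (x : X) (r : ℝ) (hr : 0 ≤ r) : E (Metric.closedBall x r) := by
  intro y z s t hy hz hyz
  obtain ⟨p, h1, h2, h3⟩ := h.h3 x y z r s t hr hy.nonneg hz.nonneg
    (by have := hy.dist_le (fun a ha => Metric.mem_closedBall.1 ha); rw [dist_comm]; linarith)
    (by have := hz.dist_le (fun a ha => Metric.mem_closedBall.1 ha); rw [dist_comm]; linarith) hyz
  exact ⟨p, h1, h2, h3⟩

theorem E_ball2 (h : H4 X) (x x' : X) (r r' : ℝ) (hr : 0 ≤ r) (hr' : 0 ≤ r')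
    (hx : dist x x' ≤ r + r') : E (Metric.closedBall x r ∩ Metric.closedBall x' r') := by
  intro y z s t hy hz hyz
  obtain ⟨p, h1, h2, h3, h4⟩ := h x x' y z r r' s t hr hr' hy.nonneg hz.nonneg hx
    (by have := hy.dist_le (fun a ha => Metric.mem_closedBall.1 ha.1); rw [dist_comm]; linarith)
    (by have := hz.dist_le (fun a ha => Metric.mem_closedBall.1 ha.1); rw [dist_comm]; linarith)
    (by have := hy.dist_le (fun a ha => Metric.mem_closedBall.1 ha.2); rw [dist_comm]; linarith)
    (by have := hz.dist_le (fun a ha => Metric.mem_closedBall.1 ha.2); rw [dist_comm]; linarith)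
    hyz
  exact ⟨p, ⟨h1, h2⟩, h3, h4⟩

theorem near_N {C : Set X} {t : ℝ} {x : X} {r : ℝ} (h : Near (N C t) x r) : Near C x (r + t) := by
  intro ε hε
  obtain ⟨a, ⟨c, hc, hac⟩, ha⟩ := h ε hε
  have := dist_triangle_left c x a
  exact ⟨c, hc, by linarith⟩

theorem E_N (h : H4 X) {C : Set X} (hC : E C) {t : ℝ} (ht : 0 ≤ t) : E (N C t) := by
  intro y z r s hy hz hyz
  obtain ⟨c, hc, h1, h2⟩ := hC y z (r + t) (s + t) (near_N hy) (near_N hz) (by linarith)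
  obtain ⟨p, h1, h2, h3⟩ := h.h3 c y z t r s ht hy.nonneg hz.nonneg (by linarith) (by linarith) hyz
  exact ⟨p, ⟨c, hc, h1⟩, h2, h3⟩

/-- one step of the descent towards `C` inside `A`. -/
def Step (A C : Set X) : Prop := ∀ t ε p, 0 ≤ t → 0 ≤ ε → p ∈ N C (t + ε) →
  (∃ a ∈ A, dist a p ≤ ε) → ∃ a ∈ A, a ∈ N C t ∧ dist a p ≤ ε

theorem chain {C : Set X} {ε : ℝ} (hε : 0 ≤ ε) (n : ℕ) :
    ∀ {A B : Set X}, Step A C → Step B C → ∀ a ∈ A, a ∈ N C (n * ε) → (∃ b ∈ B, dist b a ≤ ε) →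
    ∃ a' ∈ A, ∃ b' ∈ B, a' ∈ N C 0 ∧ b' ∈ N C 0 ∧ dist a' b' ≤ ε ∧
      dist a' a ≤ (n + 1) * ε ∧ dist b' a ≤ (n + 1) * ε := by
  induction n with
  | zero =>
    intro A B hA hB a ha haC hb
    obtain ⟨c, hc, hac⟩ := haC
    obtain ⟨b, hb, hbC, hba⟩ := hB 0 ε a le_rfl hε ⟨c, hc, by simp at hac; simp [hac, hε]⟩ hb
    exact ⟨a, ha, b, hb, ⟨c, hc, by simpa using hac⟩, hbC, by rwa [dist_comm], by simpa, by simpa⟩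
  | succ n ih =>
    intro A B hA hB a ha haC hb
    obtain ⟨b, hb, hbC, hba⟩ := hB (n * ε) ε a (by positivity) hε
      (by
        have e : (n : ℝ) * ε + ε = ((n + 1 : ℕ) : ℝ) * ε := by push_cast; ring
        rwa [e]) hb
    obtain ⟨b', hb', a', ha', h1, h2, h3, h4, h5⟩ := ih hB hA b hb hbC
      ⟨a, ha, by rwa [dist_comm]⟩
    refine ⟨a', ha', b', hb', h2, h1, by rwa [dist_comm], ?_, ?_⟩
    · have := dist_triangle a' b a
      push_cast; linarith
    · have := dist_triangle b' b a
      push_cast; linarith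

theorem converge [CompleteSpace X] (R : X → ℝ → Prop) (K : ℝ)
    (h : ∀ p δ, 0 < δ → R p δ → ∃ p', R p' (δ / 2) ∧ dist p p' ≤ K * δ)
    (p : X) (δ : ℝ) (hδ : 0 < δ) (hp : R p δ) :
    ∃ q, dist p q ≤ 2 * K * δ ∧
      ∀ A : Set X, (∀ p δ, R p δ → ∃ a ∈ A, dist a p ≤ δ) → Near A q 0 := by
  choose! g hg using h
  let f : ℕ → X := fun n => Nat.rec p (fun n q => g q (δ / 2 ^ n)) n
  have hf : ∀ n, f (n + 1) = g (f n) (δ / 2 ^ n) := fun n => rfl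
  have hR : ∀ n, R (f n) (δ / 2 ^ n) := by
    intro n
    induction n with
    | zero => simpa [f] using hp
    | succ n ih =>
      rw [hf]
      have := (hg _ _ (by positivity) ih).1
      convert this using 1
      rw [pow_succ]; field_simp
  have hd : ∀ n, dist (f n) (f (n + 1)) ≤ (2 * K * δ) / 2 / 2 ^ n := by
    intro n
    rw [hf]
    have := (hg _ _ (by positivity) (hR n)).2
    calc _ ≤ _ := this
      _ = _ := by field_simp
  obtain ⟨q, hq⟩ := cauchySeq_tendsto_of_complete (cauchySeq_of_le_geometric_two hd)
  refine ⟨q, dist_le_of_le_geometric_two_of_tendsto₀ hd hq, ?_⟩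
  intro A hA ε hε
  have h0 : Filter.Tendsto (fun n : ℕ => δ / 2 ^ n) Filter.atTop (nhds 0) := by
    have := (tendsto_pow_atTop_nhds_zero_of_lt_one (r := (1 / 2 : ℝ)) (by norm_num)
      (by norm_num)).const_mul δ
    simpa [div_eq_mul_inv] using this
  obtain ⟨n, h1, h2⟩ := ((h0.eventually (gt_mem_nhds (half_pos hε))).and
    (hq.eventually (Metric.ball_mem_nhds q (half_pos hε)))).exists
  obtain ⟨a, ha, hda⟩ := hA _ _ (hR n)
  have := dist_triangle a (f n) q
  have h2' : dist (f n) q < ε / 2 := h2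
  exact ⟨a, ha, by linarith⟩

theorem step_ball (h : H4 X) {A : Set X} (hA : E A) {x : X} {r : ℝ}
    (hx : ∃ a ∈ A, dist a x ≤ r) : Step A (Metric.closedBall x r) := by
  intro t ε p ht hε hp hpA
  obtain ⟨c, hc, hpc⟩ := hp
  rw [Metric.mem_closedBall] at hc
  have hr : 0 ≤ r := dist_nonneg.trans hc
  have hx' : ∃ a ∈ A, dist a x ≤ r + t := by
    obtain ⟨a, ha, h⟩ := hx
    exact ⟨a, ha, by linarith⟩
  have := dist_triangle p c x
  obtain ⟨a, ha, h1, h2⟩ := hA x p (r + t) ε (near_of hx') (near_of hpA)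
    (by rw [dist_comm]; linarith)
  obtain ⟨q, hq1, hq2⟩ := h.h2 a x t r ht hr (by linarith)
  exact ⟨a, ha, ⟨q, hq2, by rwa [dist_comm]⟩, h2⟩

theorem fix_pair [CompleteSpace X] (h : H4 X) {A B : Set X} (hA : E A) (hB : E B)
    (hAB : (A ∩ B).Nonempty) {a b : X} {η : ℝ} (hη : 0 < η) (ha : a ∈ A) (hb : b ∈ B)
    (hab : dist a b ≤ η) : ∃ p ∈ A ∩ B, dist a p ≤ 2 * η := by
  obtain ⟨p₀, hpA, hpB⟩ := hAB
  obtain ⟨q, h1, h2⟩ := converge (fun a δ => a ∈ A ∧ ∃ b ∈ B, dist b a ≤ δ) 1 (by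
    rintro a δ hδ ⟨ha, hb⟩
    obtain ⟨n, hn⟩ := exists_nat_ge (dist p₀ a / (δ / 2))
    rw [div_le_iff₀ (by positivity)] at hn
    obtain ⟨a', ha', b', hb', h1, -, h3, -⟩ := chain (ε := δ / 2) (by positivity) n
      (step_ball h hA (x := a) (r := δ) ⟨a, ha, by simpa using hδ.le⟩)
      (step_ball h hB (x := a) (r := δ) hb) p₀ hpA
      ⟨a, by simpa using hδ.le, hn⟩ ⟨p₀, hpB, by rw [dist_self]; positivity⟩
    refine ⟨a', ⟨ha', b', hb', by rwa [dist_comm]⟩, ?_⟩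
    obtain ⟨c, hc, hc'⟩ := h1
    rw [dist_le_zero.1 hc', dist_comm, one_mul]
    exact hc) a η hη ⟨ha, b, hb, by rwa [dist_comm]⟩
  refine ⟨q, ⟨hA.mem (h2 A ?_), hB.mem (h2 B ?_)⟩, by linarith⟩
  · rintro p δ ⟨hp, b, hb, hd⟩
    exact ⟨p, hp, by simpa using dist_nonneg.trans hd⟩
  · rintro p δ ⟨hp, hb⟩
    exact hb

theorem helly_of_step [CompleteSpace X] (h : H4 X) {A B C : Set X} (hA : E A) (hB : E B)
    (hC : E C) (hAB : (A ∩ B).Nonempty) (hCn : C.Nonempty) (sA : Step A C) (sB : Step B C) :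
    ∃ p, p ∈ A ∧ p ∈ B ∧ p ∈ C := by
  obtain ⟨p₀, hp₀⟩ := id hAB
  obtain ⟨c₀, hc₀⟩ := hCn
  obtain ⟨q, -, h2⟩ := converge (fun p δ => p ∈ A ∩ B ∧ ∃ c ∈ C, dist c p ≤ δ) 2 (by
    rintro p δ hδ ⟨hp, c, hc, hcp⟩
    obtain ⟨a, ha, b, hb, h1, -, h3, h4, -⟩ := chain (ε := δ / 8) (by positivity) 8
      sA sB p hp.1 ⟨c, hc, by rw [dist_comm]; push_cast; linarith⟩
      ⟨p, hp.2, by rw [dist_self]; positivity⟩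
    obtain ⟨p', hp', hd⟩ := fix_pair h hA hB hAB (by positivity) ha hb h3
    obtain ⟨c', hc', hc''⟩ := h1
    rw [dist_le_zero.1 hc''] at hd h4
    push_cast at h4
    refine ⟨p', ⟨hp', c', hc', by linarith⟩, ?_⟩
    have := dist_triangle_left p p' c'
    linarith) p₀ (dist c₀ p₀ + 1) (by positivity) ⟨hp₀, c₀, hc₀, by linarith⟩
  refine ⟨q, hA.mem (h2 A ?_), hB.mem (h2 B ?_), hC.mem (h2 C ?_)⟩
  · rintro p δ ⟨hp, b, hb, hd⟩
    exact ⟨p, hp.1, by simpa using dist_nonneg.trans hd⟩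
  · rintro p δ ⟨hp, b, hb, hd⟩
    exact ⟨p, hp.2, by simpa using dist_nonneg.trans hd⟩
  · rintro p δ ⟨hp, hb⟩
    exact hb

theorem helly_ball [CompleteSpace X] (h : H4 X) {A B : Set X} (hA : E A) (hB : E B)
    (hAB : (A ∩ B).Nonempty) {x : X} {r : ℝ} (hxA : ∃ a ∈ A, dist a x ≤ r)
    (hxB : ∃ a ∈ B, dist a x ≤ r) : ∃ p, p ∈ A ∧ p ∈ B ∧ dist p x ≤ r := by
  have hr : 0 ≤ r := (near_of hxA).nonneg
  exact helly_of_step h hA hB (E_ball h x r hr) hAB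
    ⟨x, Metric.mem_closedBall_self hr⟩ (step_ball h hA hxA)
    (step_ball h hB hxB)

theorem step_E [CompleteSpace X] (h : H4 X) {A C : Set X} (hA : E A) (hC : E C)
    (hAC : (A ∩ C).Nonempty) : Step A C := by
  intro t ε p ht hε hp hpA
  obtain ⟨c, hc, hpc⟩ := hp
  obtain ⟨z, hzA, hzC⟩ := hAC
  obtain ⟨y, hy1, hy2⟩ := h.h2 p c ε t hε ht (by linarith)
  obtain ⟨q, h1, h2, h3⟩ := helly_ball h hA (E_N h hC ht) ⟨z, hzA, z, hzC, by simpa⟩ hpA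
    ⟨y, ⟨c, hc, hy2⟩, hy1⟩
  exact ⟨q, h1, h2, h3⟩

theorem helly3 [CompleteSpace X] (h : H4 X) {A B C : Set X} (hA : E A) (hB : E B)
    (hC : E C) (hAB : (A ∩ B).Nonempty) (hAC : (A ∩ C).Nonempty) (hBC : (B ∩ C).Nonempty) :
    ∃ p, p ∈ A ∧ p ∈ B ∧ p ∈ C :=
  helly_of_step h hA hB hC hAB hAC.right (step_E h hA hC hAC) (step_E h hB hC hBC)

theorem E_inter [CompleteSpace X] (h : H4 X) {A B : Set X} (hA : E A) (hB : E B)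
    (hAB : (A ∩ B).Nonempty) : E (A ∩ B) := by
  intro x y r s hx hy hxy
  obtain ⟨a, ha, ha1, ha2⟩ := hA x y r s (hx.mono Set.inter_subset_left)
    (hy.mono Set.inter_subset_left) hxy
  obtain ⟨b, hb, hb1, hb2⟩ := hB x y r s (hx.mono Set.inter_subset_right)
    (hy.mono Set.inter_subset_right) hxy
  obtain ⟨p, h1, h2, h3⟩ := helly3 h hA hB (E_ball2 h x y r s hx.nonneg hy.nonneg hxy) hAB
    ⟨a, ha, ha1, ha2⟩ ⟨b, hb, hb1, hb2⟩
  exact ⟨p, ⟨h1, h2⟩, h3⟩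

theorem helly_list [CompleteSpace X] (h : H4 X) (x₀ : X) (n : ℕ) : ∀ l : List (Set X),
    l.length = n → (∀ A ∈ l, E A) → (∀ A ∈ l, ∀ B ∈ l, (A ∩ B).Nonempty) →
    ∃ p, ∀ A ∈ l, p ∈ A := by
  induction n with
  | zero =>
    intro l hl _ _
    rw [List.length_eq_zero_iff] at hl
    exact ⟨x₀, by simp [hl]⟩
  | succ n ih =>
    intro l hl hE hI
    match l, hl, hE, hI with
    | [A], _, hE, hI =>
      obtain ⟨p, hp, _⟩ := hI A (by simp) A (by simp)
      exact ⟨p, by simpa using hp⟩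
    | A :: B :: l, hl, hE, hI =>
      obtain ⟨p, hp⟩ := ih ((B :: l).map (A ∩ ·)) (by simpa using hl)
        (by
          intro C hC
          obtain ⟨C', hC', rfl⟩ := List.mem_map.1 hC
          exact E_inter h (hE A (by simp)) (hE C' (List.mem_cons_of_mem _ hC'))
            (hI A (by simp) C' (List.mem_cons_of_mem _ hC')))
        (by
          intro C hC D hD
          obtain ⟨C', hC', rfl⟩ := List.mem_map.1 hC
          obtain ⟨D', hD', rfl⟩ := List.mem_map.1 hD
          have hC' := List.mem_cons_of_mem A hC'
          have hD' := List.mem_cons_of_mem A hD'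
          obtain ⟨p, h1, h2, h3⟩ := helly3 h (hE A (by simp)) (hE C' hC') (hE D' hD')
            (hI A (by simp) C' hC') (hI A (by simp) D' hD') (hI _ hC' _ hD')
          exact ⟨p, ⟨h1, h2⟩, h1, h3⟩)
      refine ⟨p, fun C hC => ?_⟩
      rcases List.mem_cons.1 hC with rfl | hC
      · exact (hp (C ∩ B) (List.mem_map.2 ⟨B, by simp, rfl⟩)).1
      · exact (hp (A ∩ C) (List.mem_map.2 ⟨C, hC, rfl⟩)).2

theorem ext_two {A : Set X} (hA : IsExternallyNHyperconvex A 2) (x y : X) (r s : ℝ)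
    (hx : Metric.infDist x A ≤ r) (hy : Metric.infDist y A ≤ s) (hxy : dist x y ≤ r + s) :
    ∃ a ∈ A, dist a x ≤ r ∧ dist a y ≤ s := by
  have hr : 0 ≤ r := Metric.infDist_nonneg.trans hx
  have hs : 0 ≤ s := Metric.infDist_nonneg.trans hy
  obtain ⟨p, hpA, hp⟩ := hA ![x, y] ![r, s]
    (by intro i; fin_cases i <;> simpa)
    (by
      intro i j
      fin_cases i <;> fin_cases j <;> simp <;>
      first
        | assumption
        | linarith
        | (rw [dist_comm]; linarith))
  simp only [Set.mem_iInter, Metric.mem_closedBall] at hp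
  exact ⟨p, hpA, by simpa using hp 0, by simpa using hp 1⟩

theorem infDist_le_of_near {A : Set X} {x : X} {r : ℝ} (h : Near A x r) :
    Metric.infDist x A ≤ r := by
  refine le_of_forall_pos_le_add fun ε hε => ?_
  obtain ⟨a, ha, hd⟩ := h ε hε
  exact (Metric.infDist_le_dist_of_mem ha).trans (by rwa [dist_comm])

theorem E_of {A : Set X} (hA : IsExternallyNHyperconvex A 2) : E A := fun x y r s hx hy hxy =>
  ext_two hA x y r s (infDist_le_of_near hx) (infDist_le_of_near hy) hxy

end HypCvx

open HypCvx in
theorem inter_pairwise_intersecting_externally_two_hyperconvex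
    (X : Type*) [MetricSpace X] [CompleteSpace X] (hX : IsNHyperconvex X 4)
    (m : ℕ) (A : Fin m → Set X)
    (hA : ∀ i, IsExternallyNHyperconvex (A i) 2)
    (hpair : ∀ i j, (A i ∩ A j).Nonempty) :
    ∀ n : ℕ, 0 < n → IsExternallyNHyperconvex (⋂ i, A i) n := by
  intro n hn x r hxr hxx
  have h := h4_of hX
  have hr : ∀ i, 0 ≤ r i := fun i => Metric.infDist_nonneg.trans (hxr i)
  have hne : (⋂ i, A i).Nonempty := by
    obtain ⟨p, hp⟩ := helly_list h (x ⟨0, hn⟩) _ (List.ofFn A) rfl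
      (by
        intro B hB
        obtain ⟨i, rfl⟩ := (List.mem_ofFn' A B).1 hB
        exact E_of (hA i))
      (by
        intro B hB C hC
        obtain ⟨i, rfl⟩ := (List.mem_ofFn' A B).1 hB
        obtain ⟨j, rfl⟩ := (List.mem_ofFn' A C).1 hC
        exact hpair i j)
    exact ⟨p, Set.mem_iInter.2 fun i => hp _ ((List.mem_ofFn' A _).2 ⟨i, rfl⟩)⟩
  have hAB : ∀ i j, (A i ∩ Metric.closedBall (x j) (r j)).Nonempty := by
    intro i j
    have h1 : Metric.infDist (x j) (A i) ≤ r j :=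
      (Metric.infDist_le_infDist_of_subset (Set.iInter_subset A i) hne).trans (hxr j)
    obtain ⟨a, ha, hd, -⟩ := ext_two (hA i) (x j) (x j) (r j) (r j) h1 h1 (hxx j j)
    exact ⟨a, ha, hd⟩
  let B : Fin n → Set X := fun j => Metric.closedBall (x j) (r j)
  have key : ∀ C ∈ List.ofFn A ++ List.ofFn B, (∃ i, A i = C) ∨ (∃ j, B j = C) := by
    intro C hC
    rcases List.mem_append.1 hC with hC | hC
    · exact Or.inl ((List.mem_ofFn' A C).1 hC)
    · exact Or.inr ((List.mem_ofFn' B C).1 hC)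
  obtain ⟨p, hp⟩ := helly_list h (x ⟨0, hn⟩) _ (List.ofFn A ++ List.ofFn B) rfl
    (by
      intro C hC
      rcases key C hC with ⟨i, rfl⟩ | ⟨i, rfl⟩
      · exact E_of (hA i)
      · exact E_ball h _ _ (hr i))
    (by
      intro C hC D hD
      rcases key C hC with ⟨i, rfl⟩ | ⟨i, rfl⟩ <;> rcases key D hD with ⟨j, rfl⟩ | ⟨j, rfl⟩
      · exact hpair i j
      · exact hAB i j
      · rw [Set.inter_comm]; exact hAB j i
      · obtain ⟨p, h1, h2⟩ := h.h2 (x i) (x j) (r i) (r j) (hr i) (hr j) (hxx i j)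
        exact ⟨p, h1, h2⟩)
  refine ⟨p, Set.mem_iInter.2 fun i => hp _ ?_, Set.mem_iInter.2 fun j => hp (B j) ?_⟩
  · exact List.mem_append_left _ ((List.mem_ofFn' A _).2 ⟨i, rfl⟩)
  · exact List.mem_append_right _ ((List.mem_ofFn' B _).2 ⟨j, rfl⟩)
end

section
/- The collection of weakly externally hyperconvex subsets of ℝⁿ equipped with the maximum norm (i.e. of l∞ⁿ) is a Helly family of order n+1: for any finite family of weakly externally hyperconvex subsets of l∞ⁿ such that every n+1 of them have a common point, the whole family has a common point. -/
/-- `A` is weakly externally hyperconvex in `X`: for every `x ∈ X`, `A` is externally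
hyperconvex in the metric subspace `A ∪ {x}`, i.e. every family of closed balls (given as
a set of center–radius pairs) with centers in `A ∪ {x}`, radii at least the distance from
the center to `A`, and pairwise satisfying `d(p.1,q.1) ≤ p.2 + q.2`, intersects `A`. -/
def IsWeaklyExternallyHyperconvex {X : Type*} [MetricSpace X] (A : Set X) : Prop :=
  ∀ x : X, ∀ S : Set (X × ℝ),
    (∀ p ∈ S, p.1 ∈ A ∪ {x}) →
    (∀ p ∈ S, Metric.infDist p.1 A ≤ p.2) →
    (∀ p ∈ S, ∀ q ∈ S, dist p.1 q.1 ≤ p.2 + q.2) →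
    (A ∩ ⋂ p ∈ S, Metric.closedBall p.1 p.2).Nonempty

namespace WEH

/-- signed coordinate relative to `p` -/
def g {n : ℕ} (p : Fin n → ℝ) (c : Fin n × Bool) (y : Fin n → ℝ) : ℝ :=
  if c.2 then y c.1 - p c.1 else p c.1 - y c.1

lemma g_lip {n : ℕ} (p : Fin n → ℝ) (c : Fin n × Bool) (y w : Fin n → ℝ) (s : ℝ)
    (h : dist y w ≤ s) : g p c y ≤ g p c w + s := by
  have h1 := (dist_le_pi_dist y w c.1).trans h
  rw [Real.dist_eq, abs_le] at h1
  unfold g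
  split_ifs <;> linarith [h1.1, h1.2]

lemma core {n : ℕ} {A : Set (Fin n → ℝ)} (hA : IsWeaklyExternallyHyperconvex A)
    (p : Fin n → ℝ) (T : Finset (Fin n × Bool)) (e ε r : ℝ) (hε : 0 ≤ ε) (hεe : ε ≤ e)
    (hr : 0 ≤ r) (w b : Fin n → ℝ) (hw : w ∈ A) (hb : b ∈ A)
    (hbT : ∀ c ∈ T, g p c b ≤ e) (hwT : ∀ c ∈ T, g p c w ≤ e + ε)
    (hd : dist w b ≤ ε + r) :
    ∃ y ∈ A, (∀ c ∈ T, g p c y ≤ e) ∧ dist y w ≤ ε ∧ dist y b ≤ r := by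
  classical
  set R : ℝ := e + dist w b + dist b p with hR
  have h0 : 0 ≤ dist w b := dist_nonneg
  have h0' : 0 ≤ dist b p := dist_nonneg
  let x : Fin n → ℝ := fun j =>
    if (j, true) ∈ T ∧ e - ε < w j - p j then p j + (e - R)
    else if (j, false) ∈ T ∧ e - ε < p j - w j then p j - (e - R)
    else w j
  have hxb : dist x b ≤ R := by
    rw [dist_pi_le_iff (by linarith)]
    intro j
    have h1 := dist_le_pi_dist w b j
    have h2 := dist_le_pi_dist b p j
    rw [Real.dist_eq, abs_le] at h1 h2
    rw [Real.dist_eq, abs_le]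
    simp only [x]
    split_ifs with ha hb'
    · have := hbT _ ha.1
      simp only [g, if_true] at this
      constructor <;> linarith [h1.1, h1.2, h2.1, h2.2]
    · have := hbT _ hb'.1
      simp [g] at this
      constructor <;> linarith [h1.1, h1.2, h2.1, h2.2]
    · constructor <;> linarith [h1.1, h1.2, h2.1, h2.2]
  have hxw : dist x w ≤ R + ε := by
    rw [dist_pi_le_iff (by linarith)]
    intro j
    rw [Real.dist_eq, abs_le]
    simp only [x]
    split_ifs with ha hb'
    · have := hwT _ ha.1
      simp only [g, if_true] at this
      constructor <;> linarith [ha.2]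
    · have := hwT _ hb'.1
      simp [g] at this
      constructor <;> linarith [hb'.2]
    · constructor <;> linarith
  obtain ⟨y, hyA, hy⟩ := hA x {(x, R), (w, ε), (b, r)} (by
      rintro q (rfl | rfl | rfl)
      · exact Or.inr rfl
      · exact Or.inl hw
      · exact Or.inl hb) (by
      rintro q (rfl | rfl | rfl)
      · exact (Metric.infDist_le_dist_of_mem hb).trans hxb
      · simpa [Metric.infDist_zero_of_mem hw] using hε
      · simpa [Metric.infDist_zero_of_mem hb] using hr) (by
      have e1 : dist w x ≤ R + ε := by rwa [dist_comm]
      have e2 : dist b x ≤ R := by rwa [dist_comm]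
      have e3 : dist b w ≤ ε + r := by rwa [dist_comm]
      rintro q (rfl | rfl | rfl) q' (rfl | rfl | rfl) <;> simp only [dist_self] <;> linarith)
  simp only [Set.mem_insert_iff, Set.mem_singleton_iff, Set.iInter_iInter_eq_or_left,
    Set.iInter_iInter_eq_left, Set.mem_inter_iff, Metric.mem_closedBall] at hy
  obtain ⟨hy1, hy2, hy3⟩ := hy
  refine ⟨y, hyA, ?_, hy2, hy3⟩
  rintro ⟨j, σ⟩ hc
  have k1 := (dist_le_pi_dist y x j).trans hy1
  have k2 := (dist_le_pi_dist y w j).trans hy2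
  rw [Real.dist_eq, abs_le] at k1 k2
  cases σ
  · simp only [g, Bool.false_eq_true, if_false]
    by_cases hrel : e - ε < p j - w j
    · have hn : ¬ ((j, true) ∈ T ∧ e - ε < w j - p j) := by
        rintro ⟨_, h⟩; linarith
      have hx : x j = p j - (e - R) := by
        simp only [x]; rw [if_neg hn, if_pos ⟨hc, hrel⟩]
      rw [hx] at k1
      linarith [k1.1]
    · linarith [k2.1]
  · simp only [g, if_true]
    by_cases hrel : e - ε < w j - p j
    · have hx : x j = p j + (e - R) := by
        simp only [x]; rw [if_pos ⟨hc, hrel⟩]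
      rw [hx] at k1
      linarith [k1.2]
    · linarith [k2.2]

lemma moveN {n : ℕ} {A : Set (Fin n → ℝ)} (hA : IsWeaklyExternallyHyperconvex A)
    (p : Fin n → ℝ) (T : Finset (Fin n × Bool)) (e : ℝ) (he : 0 < e)
    (b : Fin n → ℝ) (hb : b ∈ A) (hbT : ∀ c ∈ T, g p c b ≤ e) (N : ℕ) :
    ∀ (s : ℝ) (w : Fin n → ℝ), 0 ≤ s → s ≤ N * e → w ∈ A → (∀ c ∈ T, g p c w ≤ e + s) →
    ∃ y ∈ A, (∀ c ∈ T, g p c y ≤ e) ∧ dist y w ≤ s := by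
  induction N with
  | zero =>
    intro s w hs hs' hw hwT
    have : s = 0 := by simp at hs'; linarith
    subst this
    exact ⟨w, hw, by simpa using hwT, by simp⟩
  | succ N ih =>
    intro s w hs hs' hw hwT
    push_cast at hs'
    by_cases hse : s ≤ e
    · obtain ⟨y, h1, h2, h3, -⟩ := core hA p T e s (dist w b) hs hse dist_nonneg w b hw hb hbT hwT
        (by linarith)
      exact ⟨y, h1, h2, h3⟩
    · push Not at hse
      obtain ⟨z, h1, h2, h3, -⟩ := core hA p T (e + (s - e)) e (dist w b) he.le (by linarith)
        dist_nonneg w b hw hb (fun c hc => by linarith [hbT c hc])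
        (fun c hc => by linarith [hwT c hc]) (by linarith)
      obtain ⟨y, k1, k2, k3⟩ := ih (s - e) z (by linarith) (by linarith) h1 h2
      exact ⟨y, k1, k2, by linarith [dist_triangle y z w]⟩

lemma move {n : ℕ} {A : Set (Fin n → ℝ)} (hA : IsWeaklyExternallyHyperconvex A)
    (p : Fin n → ℝ) (T : Finset (Fin n × Bool)) (e : ℝ) (he : 0 < e)
    (hne : ∃ b ∈ A, ∀ c ∈ T, g p c b ≤ e) (s : ℝ) (w : Fin n → ℝ) (hs : 0 ≤ s) (hw : w ∈ A)
    (hwT : ∀ c ∈ T, g p c w ≤ e + s) :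
    ∃ y ∈ A, (∀ c ∈ T, g p c y ≤ e) ∧ dist y w ≤ s := by
  obtain ⟨b, hb, hbT⟩ := hne
  obtain ⟨N, hN⟩ := exists_nat_ge (s / e)
  exact moveN hA p T e he b hb hbT N s w hs ((div_le_iff₀ he).1 hN) hw hwT

lemma triple {n : ℕ} {A : Set (Fin n → ℝ)} (hA : IsWeaklyExternallyHyperconvex A)
    (p : Fin n → ℝ) (T : Finset (Fin n × Bool)) (h : ℝ) (hh : 0 < h)
    (c₁ c₂ c₃ : Fin n × Bool) (hc₁ : c₁ ∈ T) (h12 : c₁ ≠ c₂) (h13 : c₁ ≠ c₃) (h23 : c₂ ≠ c₃)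
    (n1 : ∃ b ∈ A, ∀ c ∈ T.erase c₁, g p c b ≤ h)
    (n2 : ∃ b ∈ A, ∀ c ∈ T.erase c₂, g p c b ≤ h)
    (n3 : ∃ b ∈ A, ∀ c ∈ T.erase c₃, g p c b ≤ h) (N : ℕ) :
    ∀ y ∈ A, (∀ c ∈ T.erase c₁, g p c y ≤ h) → g p c₁ y ≤ 2 * h + N * (h / 2) →
    ∃ z ∈ A, ∀ c ∈ T, g p c z ≤ 2 * h := by
  induction N with
  | zero =>
    intro y hy hyT hy1
    refine ⟨y, hy, fun c hc => ?_⟩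
    by_cases hcc : c = c₁
    · subst hcc; simpa using hy1
    · linarith [hyT c (Finset.mem_erase.2 ⟨hcc, hc⟩)]
  | succ N ih =>
    intro y hy hyT hy1
    push_cast at hy1
    have hN : (0 : ℝ) ≤ N * (h / 2) := by positivity
    set δ : ℝ := h + (N + 1) * (h / 2) with hδ
    have hδ' : δ = h + N * (h / 2) + h / 2 := by rw [hδ]; ring
    obtain ⟨a, ha, haT, hay⟩ := move hA p (T.erase c₂) h hh n2 δ y (by linarith) hy (by
      intro c hc
      by_cases hcc : c = c₁
      · subst hcc; linarith
      · linarith [hyT c (Finset.mem_erase.2 ⟨hcc, Finset.mem_of_mem_erase hc⟩)])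
    have aT : ∀ c ∈ T, g p c a ≤ h + δ := by
      intro c hc
      by_cases hcc : c = c₂
      · have := hyT c (Finset.mem_erase.2 ⟨by rw [hcc]; exact h12.symm, hc⟩)
        linarith [g_lip p c a y δ hay]
      · linarith [haT c (Finset.mem_erase.2 ⟨hcc, hc⟩)]
    obtain ⟨b, hb, hbT, hba⟩ := move hA p (T.erase c₃) h hh n3 δ a (by linarith) ha
      (fun c hc => aT c (Finset.mem_of_mem_erase hc))
    obtain ⟨w, hw, hwT, hwa, hwb⟩ := core hA p ((T.erase c₂).erase c₃) h (h / 2) (δ - h / 2)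
      (by linarith) (by linarith) (by linarith) a b ha hb
      (fun c hc => by
        simp only [Finset.mem_erase] at hc
        exact hbT c (Finset.mem_erase.2 ⟨hc.1, hc.2.2⟩))
      (fun c hc => by linarith [haT c (Finset.mem_of_mem_erase hc)])
      (by rw [dist_comm]; linarith)
    have wT : ∀ c ∈ T, g p c w ≤ h + (δ - h / 2) := by
      intro c hc
      by_cases hc3 : c = c₃
      · have := haT c (Finset.mem_erase.2 ⟨by rw [hc3]; exact h23.symm, hc⟩)
        linarith [g_lip p c w a _ hwa]
      · by_cases hc2 : c = c₂
        · have := hbT c (Finset.mem_erase.2 ⟨hc3, hc⟩)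
          linarith [g_lip p c w b _ hwb]
        · linarith [hwT c (Finset.mem_erase.2 ⟨hc3, Finset.mem_erase.2 ⟨hc2, hc⟩⟩)]
    obtain ⟨y', hy', hyT', hyw⟩ := move hA p (T.erase c₁) h hh n1 (δ - h / 2) w (by linarith) hw
      (fun c hc => wT c (Finset.mem_of_mem_erase hc))
    refine ih y' hy' hyT' ?_
    have h1 : g p c₁ w ≤ h :=
      hwT c₁ (Finset.mem_erase.2 ⟨h13, Finset.mem_erase.2 ⟨h12, hc₁⟩⟩)
    linarith [g_lip p c₁ y' w _ hyw]

lemma pairs {n : ℕ} {A : Set (Fin n → ℝ)} (hA : IsWeaklyExternallyHyperconvex A)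
    (p : Fin n → ℝ) (hne : A.Nonempty)
    (hp : ∀ c c' : Fin n × Bool, ∀ h : ℝ, 0 < h → ∃ y ∈ A, g p c y ≤ h ∧ g p c' y ≤ h) (k : ℕ) :
    ∀ T : Finset (Fin n × Bool), T.card ≤ k → ∀ h : ℝ, 0 < h → ∃ y ∈ A, ∀ c ∈ T, g p c y ≤ h := by
  induction k with
  | zero =>
    intro T hT h hh
    obtain ⟨y, hy⟩ := hne
    have : T = ∅ := by simpa using hT
    subst this
    exact ⟨y, hy, by simp⟩
  | succ k ih =>
    intro T hT h hh
    by_cases h2 : 2 < T.card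
    · obtain ⟨a, b, c, ha, hb, hc, hab, hac, hbc⟩ := Finset.two_lt_card_iff.1 h2
      have er : ∀ d ∈ T, ∃ y ∈ A, ∀ c ∈ T.erase d, g p c y ≤ h / 2 := by
        intro d hd
        refine ih _ ?_ (h / 2) (by linarith)
        rw [Finset.card_erase_of_mem hd]; omega
      obtain ⟨y, hy, hyT⟩ := er a ha
      obtain ⟨N, hN⟩ := exists_nat_ge (g p a y / (h / 2 / 2))
      have hN' := (div_le_iff₀ (by linarith)).1 hN
      obtain ⟨z, hz, hzT⟩ := triple hA p T (h / 2) (by linarith) a b c ha hab hac hbc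
        (er a ha) (er b hb) (er c hc) N y hy hyT (by linarith)
      exact ⟨z, hz, fun c hc => by linarith [hzT c hc]⟩
    · have : T.card = 0 ∨ T.card = 1 ∨ T.card = 2 := by omega
      rcases this with h0 | h1 | h2
      · obtain ⟨y, hy⟩ := hne
        rw [Finset.card_eq_zero] at h0
        subst h0
        exact ⟨y, hy, by simp⟩
      · obtain ⟨c, rfl⟩ := Finset.card_eq_one.1 h1
        obtain ⟨y, hy, h3, -⟩ := hp c c h hh
        exact ⟨y, hy, by simpa using h3⟩
      · obtain ⟨c, c', -, rfl⟩ := Finset.card_eq_two.1 h2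
        obtain ⟨y, hy, h3, h4⟩ := hp c c' h hh
        exact ⟨y, hy, by simpa using ⟨h3, h4⟩⟩

lemma half {n : ℕ} {A : Set (Fin n → ℝ)} (hA : IsWeaklyExternallyHyperconvex A)
    (p : Fin n → ℝ) (c c' : Fin n × Bool) (h : ℝ) (hh : 0 < h)
    (a b : Fin n → ℝ) (ha : a ∈ A) (hb : b ∈ A) (h1 : g p c' b ≤ 0) (h0 : 0 ≤ g p c' a)
    (h2 : g p c a + g p c' a ≤ 0) :
    ∃ y ∈ A, g p c y ≤ h ∧ g p c' y ≤ h := by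
  obtain ⟨y, hy, hyT, hd⟩ := move hA p {c'} h hh ⟨b, hb, by simpa using by linarith⟩
    (g p c' a) a h0 ha (by simpa using hh.le)
  refine ⟨y, hy, ?_, by simpa using hyT⟩
  linarith [g_lip p c y a _ hd]

lemma convex {n : ℕ} {A : Set (Fin n → ℝ)} (hA : IsWeaklyExternallyHyperconvex A) :
    Convex ℝ A := by
  intro a ha b hb s t hs ht hst
  set p := s • a + t • b with hp
  have key : ∀ c : Fin n × Bool, ∃ u : ℝ, g p c a = t * u ∧ g p c b = - (s * u) := by
    rintro ⟨j, σ⟩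
    have hs' : s = 1 - t := by linarith
    cases σ
    · refine ⟨b j - a j, ?_, ?_⟩ <;> simp [g, hp, hs'] <;> ring
    · refine ⟨a j - b j, ?_, ?_⟩ <;> simp [g, hp, hs'] <;> ring
  have hpair : ∀ c c' : Fin n × Bool, ∀ h : ℝ, 0 < h →
      ∃ y ∈ A, g p c y ≤ h ∧ g p c' y ≤ h := by
    intro c c' h hh
    obtain ⟨u, hu1, hu2⟩ := key c
    obtain ⟨v, hv1, hv2⟩ := key c'
    rcases le_total u 0 with hu | hu <;> rcases le_total v 0 with hv | hv
    · refine ⟨a, ha, ?_, ?_⟩ <;> nlinarith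
    · rcases le_total (u + v) 0 with huv | huv
      · exact half hA p c c' h hh a b ha hb (by nlinarith) (by nlinarith) (by nlinarith)
      · obtain ⟨y, hy, k1, k2⟩ := half hA p c' c h hh b a hb ha (by nlinarith) (by nlinarith)
          (by nlinarith)
        exact ⟨y, hy, k2, k1⟩
    · rcases le_total (u + v) 0 with huv | huv
      · obtain ⟨y, hy, k1, k2⟩ := half hA p c' c h hh a b ha hb (by nlinarith) (by nlinarith)
          (by nlinarith)
        exact ⟨y, hy, k2, k1⟩
      · exact half hA p c c' h hh b a hb ha (by nlinarith) (by nlinarith) (by nlinarith)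
    · refine ⟨b, hb, ?_, ?_⟩ <;> nlinarith
  have hinf : Metric.infDist p A ≤ 0 := by
    refine le_of_forall_pos_le_add fun h hh => ?_
    obtain ⟨y, hy, hyT⟩ := pairs hA p ⟨a, ha⟩ hpair _ Finset.univ le_rfl h hh
    refine (Metric.infDist_le_dist_of_mem hy).trans ?_
    rw [dist_pi_le_iff (by linarith)]
    intro j
    have h1 := hyT (j, true) (Finset.mem_univ _)
    have h2 := hyT (j, false) (Finset.mem_univ _)
    simp [g] at h1 h2
    rw [Real.dist_eq, abs_le]
    constructor <;> linarith
  obtain ⟨y, hy, hy'⟩ := hA p {(p, 0)} (by rintro q rfl; exact Or.inr rfl)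
    (by rintro q rfl; exact hinf) (by rintro q rfl q' rfl; simp)
  simp only [Set.mem_singleton_iff, Set.iInter_iInter_eq_left, Metric.closedBall_zero] at hy'
  rwa [← hy']

end WEH


/-- Helly theorem for weakly externally hyperconvex subsets of `l∞ⁿ = (ℝⁿ, ‖·‖_∞)`
(note that `Fin n → ℝ` carries the sup metric): if every subfamily of at most `n + 1`
members of a finite family of weakly externally hyperconvex sets has a common point, then
the whole family has a common point. -/
theorem helly_weaklyExternallyHyperconvex (n : ℕ) (ι : Type*) (s : Finset ι)
    (A : ι → Set (Fin n → ℝ))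
    (hA : ∀ i ∈ s, IsWeaklyExternallyHyperconvex (A i))
    (h : ∀ t ⊆ s, t.card ≤ n + 1 → (⋂ i ∈ t, A i).Nonempty) :
    (⋂ i ∈ s, A i).Nonempty := by
  refine Convex.helly_theorem' (𝕜 := ℝ) (fun i hi => WEH.convex (hA i hi)) ?_
  intro I hI hc
  exact h I hI (by simpa using hc)
end
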